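/- For every standard disjunction δ there is a standard conjunction κ such that ¬δ ↔ κ holds at every pointed general concurrent game model, and conversely, for every standard conjunction κ there is a standard disjunction δ such that ¬κ ↔ δ holds at every pointed general concurrent game model. -/

import Mathlib

/-!
Both directions keep the coalition data `A`, `φ`, `B`, `ψ` unchanged and replace only the
elementary part `γ` by its De Morgan dual. The side conditions of standard disjunctions and
standard conjunctions on that data coincide, so they carry over verbatim, and
`¬(γ ∨ (P → Q))` is propositionally `¬γ ∧ P ∧ ¬Q`. The dual of the elementary part is built by
induction in `IsElemDisj.exists_neg` and `IsElemConj.exists_neg`; the semantics of the two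
standard forms is unfolded in `StdDisj.sat_toFormula` and `StdConj.sat_toFormula`.
-/

namespace CL

/-- The language Φ of coalition logic over a set of agents, with atomic
propositions drawn from ℕ (a countable set). -/
inductive Formula (Agent : Type) : Type
  | top : Formula Agent
  | atom : ℕ → Formula Agent
  | neg : Formula Agent → Formula Agent
  | and : Formula Agent → Formula Agent → Formula Agent
  | coal : Set Agent → Formula Agent → Formula Agent

namespace Formula

variable {Agent : Type}

def bot : Formula Agent := neg top

def or (φ ψ : Formula Agent) : Formula Agent := neg (and (neg φ) (neg ψ))

def imp (φ ψ : Formula Agent) : Formula Agent := or (neg φ) ψ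

def iff (φ ψ : Formula Agent) : Formula Agent := and (imp φ ψ) (imp ψ φ)

end Formula

/-- The three frame properties: seriality, independence of agents, determinism.
`ES` is represented by `Set P3`, the eight subsets of {S, I, D}. -/
inductive P3 : Type
  | S | I | D
deriving DecidableEq
section
open Classical

/-- Merge of two joint actions of disjoint coalitions. -/
noncomputable def jaUnion {Agent Act : Type} {C D : Set Agent}
    (σC : C → Act) (σD : D → Act) : ↥(C ∪ D) → Act :=
  fun a =>
    if h : a.1 ∈ C then σC ⟨a.1, h⟩
    else σD ⟨a.1, ((Set.mem_union _ _ _).mp a.2).resolve_left h⟩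

end

/-- A general concurrent game frame: a nonempty set of states, a nonempty set
of actions, and an outcome function for the grand coalition.  Joint actions of
a coalition C are functions C → Act; action profiles are functions Agent → Act. -/
structure Frame (Agent : Type) where
  State : Type
  state_nonempty : Nonempty State
  Act : Type
  act_nonempty : Nonempty Act
  out : State → (Agent → Act) → Set State

namespace Frame

variable {Agent : Type} (F : Frame Agent)

/-- Outcome function for a coalition C. -/
def outC (C : Set Agent) (s : F.State) (σ : C → F.Act) : Set F.State :=
  ⋃ (τ : Agent → F.Act) (_ : ∀ a : C, τ a.1 = σ a), F.out s τ

/-- Availability function: the available joint actions of C at s. -/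
def aja (C : Set Agent) (s : F.State) : Set (C → F.Act) :=
  {σ | (F.outC C s σ).Nonempty}

def Serial : Prop := ∀ (s : F.State) (C : Set Agent), (F.aja C s).Nonempty

def Independent : Prop :=
  ∀ (s : F.State) (C D : Set Agent), C ∩ D = ∅ →
    ∀ σC ∈ F.aja C s, ∀ σD ∈ F.aja D s, jaUnion σC σD ∈ F.aja (C ∪ D) s

def Deterministic : Prop :=
  ∀ s : F.State, ∀ σ ∈ F.aja Set.univ s, ∃ t : F.State, F.outC Set.univ s σ = {t}

end Frame

/-- A general concurrent game model: a frame together with a labeling function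
(atomic propositions are drawn from the countable set ℕ). -/
structure Model (Agent : Type) extends Frame Agent where
  lab : State → Set ℕ

namespace Model

variable {Agent : Type} (M : Model Agent)

/-- Satisfaction: M, s ⊨ φ. -/
def sat : Formula Agent → M.State → Prop
  | .top, _ => True
  | .atom n, s => n ∈ M.lab s
  | .neg φ, s => ¬ sat φ s
  | .and φ ψ, s => sat φ s ∧ sat ψ s
  | .coal C φ, s => ∃ σ ∈ M.toFrame.aja C s, ∀ t ∈ M.toFrame.outC C s σ, sat φ t

/-- M is an X-model (for X ∈ ES). -/
def IsX (X : Set P3) : Prop :=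
  (P3.S ∈ X → M.toFrame.Serial) ∧ (P3.I ∈ X → M.toFrame.Independent) ∧
    (P3.D ∈ X → M.toFrame.Deterministic)

end Model

/-- φ is X-valid: φ holds at every pointed X-model. -/
def XValid {Agent : Type} (X : Set P3) (φ : Formula Agent) : Prop :=
  ∀ M : Model Agent, M.IsX X → ∀ s : M.State, M.sat φ s

/-- φ is X-satisfiable: φ holds at some pointed X-model. -/
def XSat {Agent : Type} (X : Set P3) (φ : Formula Agent) : Prop :=
  ∃ M : Model Agent, M.IsX X ∧ ∃ s : M.State, M.sat φ s

/-- φ ⊨_XL ψ : ψ holds at every pointed X-model at which φ holds. -/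
def XConseq {Agent : Type} (X : Set P3) (φ ψ : Formula Agent) : Prop :=
  ∀ M : Model Agent, M.IsX X → ∀ s : M.State, M.sat φ s → M.sat ψ s
def bigConj {Agent : Type} (l : List (Formula Agent)) : Formula Agent :=
  l.foldr Formula.and Formula.top

def bigDisj {Agent : Type} (l : List (Formula Agent)) : Formula Agent :=
  l.foldr Formula.or Formula.bot

inductive IsLiteral {Agent : Type} : Formula Agent → Prop
  | pos (n : ℕ) : IsLiteral (Formula.atom n)
  | neg (n : ℕ) : IsLiteral (Formula.neg (Formula.atom n))

/-- An elementary disjunction: a disjunction of propositional literals. -/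
inductive IsElemDisj {Agent : Type} : Formula Agent → Prop
  | lit {φ : Formula Agent} : IsLiteral φ → IsElemDisj φ
  | or {φ ψ : Formula Agent} : IsElemDisj φ → IsElemDisj ψ → IsElemDisj (φ.or ψ)

/-- An elementary conjunction: a conjunction of propositional literals. -/
inductive IsElemConj {Agent : Type} : Formula Agent → Prop
  | lit {φ : Formula Agent} : IsLiteral φ → IsElemConj φ
  | and {φ ψ : Formula Agent} : IsElemConj φ → IsElemConj ψ → IsElemConj (φ.and ψ)

/-- The data of a standard disjunction γ ∨ (⋀_{i∈NI}⟨A_i⟩φ_i → ⋁_{j∈PI}⟨B_j⟩ψ_j):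
NI is represented by `Fin n` (possibly empty) and PI by `Fin (m+1)` (nonempty);
(1) if NI ≠ ∅ then ⟨A_i⟩φ_i = ⟨∅⟩⊤ for some i ∈ NI, and (2) ⟨B_0⟩ψ_0 = ⟨AG⟩⊥. -/
structure StdDisj (Agent : Type) where
  γ : Formula Agent
  hγ : IsElemDisj γ
  n : ℕ
  m : ℕ
  A : Fin n → Set Agent
  φ : Fin n → Formula Agent
  B : Fin (m + 1) → Set Agent
  ψ : Fin (m + 1) → Formula Agent
  hNI : n ≠ 0 → ∃ i : Fin n, A i = ∅ ∧ φ i = Formula.top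
  hB0 : B 0 = Set.univ
  hψ0 : ψ 0 = Formula.bot

namespace StdDisj

variable {Agent : Type} (d : StdDisj Agent)

/-- The formula γ ∨ (⋀_{i∈NI}⟨A_i⟩φ_i → ⋁_{j∈PI}⟨B_j⟩ψ_j). -/
def toFormula : Formula Agent :=
  d.γ.or
    ((bigConj ((List.finRange d.n).map fun i => Formula.coal (d.A i) (d.φ i))).imp
      (bigDisj ((List.finRange (d.m + 1)).map fun j => Formula.coal (d.B j) (d.ψ j))))

/-- N ⊆ NI is X-neat. -/
def Neat (X : Set P3) (N : Finset (Fin d.n)) : Prop :=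
  (∀ i ∈ N, ∀ i' ∈ N, i ≠ i' → d.A i ∩ d.A i' = ∅) ∧
    (P3.S ∉ X → N.Nonempty) ∧
    (P3.I ∉ X → ∀ i ∈ N, ∀ i' ∈ N, d.A i ≠ ∅ → d.A i' ≠ ∅ → i = i')

/-- The set of basic positive indices `PI₀ = { j ∈ PI : B_j = AG }`. -/
noncomputable def PI0 : Finset (Fin (d.m + 1)) :=
  letI := Classical.decPred fun j : Fin (d.m + 1) => d.B j = Set.univ
  Finset.univ.filter fun j => d.B j = Set.univ

end StdDisj

/-- The data of a standard conjunction γ ∧ ⋀_{i∈NI}⟨A_i⟩φ_i ∧ ⋀_{j∈PI}¬⟨B_j⟩ψ_j: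
(1) if NI ≠ ∅ then ⟨A_i⟩φ_i = ⟨∅⟩⊤ for some i ∈ NI, and (2) ¬⟨B_0⟩ψ_0 = ¬⟨AG⟩⊥. -/
structure StdConj (Agent : Type) where
  γ : Formula Agent
  hγ : IsElemConj γ
  n : ℕ
  m : ℕ
  A : Fin n → Set Agent
  φ : Fin n → Formula Agent
  B : Fin (m + 1) → Set Agent
  ψ : Fin (m + 1) → Formula Agent
  hNI : n ≠ 0 → ∃ i : Fin n, A i = ∅ ∧ φ i = Formula.top
  hB0 : B 0 = Set.univ
  hψ0 : ψ 0 = Formula.bot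

/-- The formula γ ∧ ⋀_{i∈NI}⟨A_i⟩φ_i ∧ ⋀_{j∈PI}¬⟨B_j⟩ψ_j. -/
def StdConj.toFormula {Agent : Type} (k : StdConj Agent) : Formula Agent :=
  (k.γ.and
      (bigConj ((List.finRange k.n).map fun i => Formula.coal (k.A i) (k.φ i)))).and
    (bigConj ((List.finRange (k.m + 1)).map fun j =>
      Formula.neg (Formula.coal (k.B j) (k.ψ j))))

namespace Model

variable {Agent : Type} (M : Model Agent)

theorem sat_or (φ ψ : Formula Agent) (s : M.State) :
    M.sat (φ.or ψ) s ↔ M.sat φ s ∨ M.sat ψ s := by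
  simp only [Formula.or, sat]
  tauto

theorem sat_imp (φ ψ : Formula Agent) (s : M.State) :
    M.sat (φ.imp ψ) s ↔ (M.sat φ s → M.sat ψ s) := by
  simp only [Formula.imp, sat_or, sat]
  tauto

theorem sat_iff (φ ψ : Formula Agent) (s : M.State) :
    M.sat (φ.iff ψ) s ↔ (M.sat φ s ↔ M.sat ψ s) := by
  simp only [Formula.iff, sat, sat_imp]
  tauto

theorem sat_bigConj (l : List (Formula Agent)) (s : M.State) :
    M.sat (bigConj l) s ↔ ∀ φ ∈ l, M.sat φ s := by
  induction l with
  | nil => simp [bigConj, sat]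
  | cons a l ih =>
    rw [List.forall_mem_cons, ← ih]
    rfl

theorem sat_bigDisj (l : List (Formula Agent)) (s : M.State) :
    M.sat (bigDisj l) s ↔ ∃ φ ∈ l, M.sat φ s := by
  induction l with
  | nil => simp [bigDisj, Formula.bot, sat]
  | cons a l ih =>
    simp only [List.mem_cons, exists_eq_or_imp, ← ih]
    exact M.sat_or a (bigDisj l) s

end Model

theorem StdDisj.sat_toFormula {Agent : Type} (d : StdDisj Agent) (M : Model Agent)
    (s : M.State) :
    M.sat d.toFormula s ↔ M.sat d.γ s ∨
      ((∀ i, M.sat (.coal (d.A i) (d.φ i)) s) → ∃ j, M.sat (.coal (d.B j) (d.ψ j)) s) := by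
  simp only [StdDisj.toFormula, Model.sat_or, Model.sat_imp, Model.sat_bigConj,
    Model.sat_bigDisj, List.mem_map, List.mem_finRange, true_and, exists_exists_eq_and,
    forall_exists_index, forall_apply_eq_imp_iff]

theorem StdConj.sat_toFormula {Agent : Type} (k : StdConj Agent) (M : Model Agent)
    (s : M.State) :
    M.sat k.toFormula s ↔ (M.sat k.γ s ∧ ∀ i, M.sat (.coal (k.A i) (k.φ i)) s) ∧
      ∀ j, ¬ M.sat (.coal (k.B j) (k.ψ j)) s := by
  unfold StdConj.toFormula
  rw [Model.sat, Model.sat, Model.sat_bigConj, Model.sat_bigConj, List.forall_mem_map,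
    List.forall_mem_map]
  simp only [List.mem_finRange, forall_const]
  rfl

/-- Literals are closed under negation up to equivalence, by cancelling a double negation. -/
theorem IsLiteral.exists_neg {Agent : Type} {φ : Formula Agent} (h : IsLiteral φ) :
    ∃ ψ : Formula Agent, IsLiteral ψ ∧
      ∀ (M : Model Agent) (s : M.State), M.sat ψ s ↔ ¬ M.sat φ s := by
  cases h with
  | pos n => exact ⟨_, .neg n, fun _ _ => Iff.rfl⟩
  | neg n => exact ⟨_, .pos n, fun _ _ => not_not.symm⟩

theorem IsElemDisj.exists_neg {Agent : Type} {γ : Formula Agent} (h : IsElemDisj γ) :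
    ∃ γ' : Formula Agent, IsElemConj γ' ∧
      ∀ (M : Model Agent) (s : M.State), M.sat γ' s ↔ ¬ M.sat γ s := by
  induction h with
  | lit hl =>
    obtain ⟨ψ, hψ, e⟩ := hl.exists_neg
    exact ⟨ψ, .lit hψ, e⟩
  | or _ _ ih₁ ih₂ =>
    obtain ⟨α, hα, eα⟩ := ih₁
    obtain ⟨β, hβ, eβ⟩ := ih₂
    refine ⟨α.and β, .and hα hβ, fun M s => ?_⟩
    rw [Model.sat_or, not_or, ← eα, ← eβ]
    rfl

theorem IsElemConj.exists_neg {Agent : Type} {γ : Formula Agent} (h : IsElemConj γ) :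
    ∃ γ' : Formula Agent, IsElemDisj γ' ∧
      ∀ (M : Model Agent) (s : M.State), M.sat γ' s ↔ ¬ M.sat γ s := by
  induction h with
  | lit hl =>
    obtain ⟨ψ, hψ, e⟩ := hl.exists_neg
    exact ⟨ψ, .lit hψ, e⟩
  | and _ _ ih₁ ih₂ =>
    obtain ⟨α, hα, eα⟩ := ih₁
    obtain ⟨β, hβ, eβ⟩ := ih₂
    refine ⟨α.or β, .or hα hβ, fun M s => ?_⟩
    rw [Model.sat_or, eα, eβ, Model.sat, not_and_or]

/-- The negation of a standard disjunction is equivalent (at every pointed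
general concurrent game model) to a standard conjunction, and vice versa. -/
theorem neg_std_equiv {Agent : Type} [Fintype Agent] :
    (∀ d : StdDisj Agent, ∃ k : StdConj Agent,
      ∀ (M : Model Agent) (s : M.State),
        M.sat ((Formula.neg d.toFormula).iff k.toFormula) s) ∧
    (∀ k : StdConj Agent, ∃ d : StdDisj Agent,
      ∀ (M : Model Agent) (s : M.State),
        M.sat ((Formula.neg k.toFormula).iff d.toFormula) s) := by
  constructor
  · intro d
    obtain ⟨γ', hγ', e⟩ := d.hγ.exists_neg
    refine ⟨⟨γ', hγ', d.n, d.m, d.A, d.φ, d.B, d.ψ, d.hNI, d.hB0, d.hψ0⟩, fun M s => ?_⟩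
    rw [Model.sat_iff, Model.sat, StdDisj.sat_toFormula, StdConj.sat_toFormula, e,
      ← not_exists]
    tauto
  · intro k
    obtain ⟨γ', hγ', e⟩ := k.hγ.exists_neg
    refine ⟨⟨γ', hγ', k.n, k.m, k.A, k.φ, k.B, k.ψ, k.hNI, k.hB0, k.hψ0⟩, fun M s => ?_⟩
    rw [Model.sat_iff, Model.sat, StdDisj.sat_toFormula, StdConj.sat_toFormula, e,
      ← not_exists]
    tauto

end CL
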